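/- arXiv:2009.12237 — 4 statements merged into one kernel-verified Lean document; each statement's English description precedes it below -/
import Mathlib

section
/- The number of valid pair-assignments g extending a function f : Fin n → Fin I depends only on the fiber vector of f: if f and f′ have the same fiber vector then they admit the same number of valid g. Consequently, writing E(k) for this common number for fiber vector k, the total number of models on Fin n equals ∑_{k : Σk = n} C(n;k) · E(k). -/
/-!
For a fixed `f`, the values of `g` at different pairs are chosen independently, so the number of
valid `g` is `∏_{a < b} n_{f a, f b}`. The involution `s` makes `n_{ij}` symmetric, so this is a
product over unordered pairs and is unchanged when `f` is replaced by `f ∘ σ` for a permutation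
`σ` of the domain (`prod_pairs_comp_perm`). Two functions with the same fiber vector differ
by such a permutation (`fiberVec_eq_iff`), which gives the first claim.

For the second claim, group the models by the fiber vector of `f`. The functions with fiber
vector `k` form one orbit of the symmetric group on `Fin n`; the stabilizer has order `∏ i, k_i!`,
so by the orbit-stabilizer theorem there are `n! / ∏ i, k_i!` of them (`card_fiberVec_eq`).
-/

/-- The set of ordered pairs `a < b` of domain elements `Fin n`. -/
abbrev IdxPair (n : ℕ) := {p : Fin n × Fin n // p.1 < p.2}

/-- A model on the domain `Fin n`: a 1-type assignment `f : Fin n → Fin I` together with a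
pair-type assignment `g` on the pairs `a < b`, compatible with `N`. -/
structure PairModel (n I : ℕ) (V : Type) (N : Fin I → Fin I → V → Bool) where
  f : Fin n → Fin I
  g : IdxPair n → V
  valid : ∀ p : IdxPair n, N (f p.1.1) (f p.1.2) (g p) = true

/-- `n_{ij}`: the number of pair-types `v ∈ V` compatible with the 1-types `i, j`. -/
noncomputable def nty {I : ℕ} {V : Type} (N : Fin I → Fin I → V → Bool) (i j : Fin I) : ℕ :=
  Nat.card {v : V // N i j v = true}

/-- The fiber vector of `f : Fin n → Fin I`: `k_i = |f⁻¹(i)|`. -/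
noncomputable def fiberVec {n I : ℕ} (f : Fin n → Fin I) : Fin I → ℕ :=
  fun i => Nat.card {a : Fin n // f a = i}

/-- `k(i,j) = k_i (k_i − 1)/2` if `i = j` and `k_i · k_j` otherwise. -/
def kij {I : ℕ} (k : Fin I → ℕ) (i j : Fin I) : ℕ :=
  if i = j then k i * (k i - 1) / 2 else k i * k j

/-- The number of valid `g` extending `f`. -/
noncomputable def extCount {n I : ℕ} {V : Type} (N : Fin I → Fin I → V → Bool)
    (f : Fin n → Fin I) : ℕ :=
  Nat.card {g : IdxPair n → V // ∀ p : IdxPair n, N (f p.1.1) (f p.1.2) (g p) = true}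

lemma extCount_eq_prod {n I : ℕ} {V : Type} (N : Fin I → Fin I → V → Bool)
    (f : Fin n → Fin I) :
    extCount N f = ∏ p : IdxPair n, nty N (f p.1.1) (f p.1.2) := by
  unfold extCount nty
  rw [← Nat.card_pi]
  exact Nat.card_congr
    (Equiv.subtypePiEquivPi (p := fun (p : IdxPair n) v => N (f p.1.1) (f p.1.2) v = true))

lemma nty_symm {I : ℕ} {V : Type} {s : V → V} (hs : Function.Involutive s)
    {N : Fin I → Fin I → V → Bool} (hN : ∀ i j v, N i j v = N j i (s v)) (i j : Fin I) :
    nty N i j = nty N j i :=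
  Nat.card_congr ((hs.toPerm s).subtypeEquiv fun v => by simp [hN i j v])

/-- The action of a permutation on the pairs `a < b`: apply it to both entries, then sort. -/
def permPair {n : ℕ} (σ : Equiv.Perm (Fin n)) (p : IdxPair n) : IdxPair n :=
  if h : σ p.1.1 < σ p.1.2 then ⟨(σ p.1.1, σ p.1.2), h⟩
  else ⟨(σ p.1.2, σ p.1.1),
    lt_of_le_of_ne (not_lt.mp h) fun e => p.2.ne (σ.injective e).symm⟩

lemma permPair_injective {n : ℕ} (σ : Equiv.Perm (Fin n)) : Function.Injective (permPair σ) := by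
  rintro ⟨⟨a, b⟩, hab⟩ ⟨⟨c, d⟩, hcd⟩ h
  dsimp only at hab hcd
  unfold permPair at h
  split_ifs at h <;>
    simp only [Subtype.mk.injEq, Prod.mk.injEq, σ.injective.eq_iff] at h ⊢ <;> grind

lemma prod_pairs_comp_perm {n I : ℕ} (c : Fin I → Fin I → ℕ) (hc : ∀ i j, c i j = c j i)
    (f : Fin n → Fin I) (σ : Equiv.Perm (Fin n)) :
    ∏ p : IdxPair n, c (f (σ p.1.1)) (f (σ p.1.2)) = ∏ p : IdxPair n, c (f p.1.1) (f p.1.2) := by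
  rw [← (Finite.injective_iff_bijective.mp (permPair_injective σ)).prod_comp
    fun p : IdxPair n => c (f p.1.1) (f p.1.2)]
  refine Finset.prod_congr rfl fun p _ => ?_
  unfold permPair
  split_ifs
  · rfl
  · exact hc _ _

/-- Two functions have the same fiber vector exactly when they differ by a permutation of the
domain. -/
lemma fiberVec_eq_iff {n I : ℕ} (f f' : Fin n → Fin I) :
    fiberVec f' = fiberVec f ↔ ∃ σ : Equiv.Perm (Fin n), f' = f ∘ σ := by
  constructor
  · intro h
    have e : ∀ i, Nonempty ({a // f' a = i} ≃ {a // f a = i}) := fun i =>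
      Finite.card_eq.mp (congrFun h i)
    exact ⟨Equiv.ofFiberEquiv fun i => (e i).some,
      funext fun a => (Equiv.ofFiberEquiv_map _ a).symm⟩
  · rintro ⟨σ, rfl⟩
    exact funext fun i => Nat.card_congr (σ.subtypeEquiv fun a => Iff.rfl)

lemma extCount_congr {n I : ℕ} {V : Type} {s : V → V} (hs : Function.Involutive s)
    {N : Fin I → Fin I → V → Bool} (hN : ∀ i j v, N i j v = N j i (s v))
    {f f' : Fin n → Fin I} (h : fiberVec f = fiberVec f') : extCount N f = extCount N f' := by
  obtain ⟨σ, rfl⟩ := (fiberVec_eq_iff f' f).mp h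
  simp only [extCount_eq_prod]
  exact prod_pairs_comp_perm _ (nty_symm hs hN) f' σ

lemma sum_fiberVec {n I : ℕ} (f : Fin n → Fin I) : ∑ i, fiberVec f i = n := by
  unfold fiberVec
  rw [← Nat.card_sigma, Nat.card_congr (Equiv.sigmaFiberEquiv f), Nat.card_fin]

lemma exists_fiberVec_eq {n I : ℕ} (k : Fin I → ℕ) (hk : ∑ i, k i = n) :
    ∃ f : Fin n → Fin I, fiberVec f = k := by
  have e : Fin n ≃ Σ i, Fin (k i) := (Finite.card_eq.mp (by simp [hk])).some
  refine ⟨fun a => (e a).1, funext fun i => ?_⟩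
  calc Nat.card {a // (e a).1 = i}
      = Nat.card {x : Σ i, Fin (k i) // x.1 = i} :=
        Nat.card_congr (e.subtypeEquiv fun a => Iff.rfl)
    _ = Nat.card (Fin (k i)) := Nat.card_congr (Equiv.sigmaSubtype i)
    _ = k i := Nat.card_fin _

/-- The number of functions with fiber vector `k` is a multinomial coefficient, by the
orbit-stabilizer theorem for the symmetric group acting by precomposition. -/
lemma card_fiberVec_eq {n I : ℕ} (k : Fin I → ℕ) (hk : ∑ i, k i = n) :
    Set.ncard {f : Fin n → Fin I | fiberVec f = k} = Nat.multinomial Finset.univ k := by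
  obtain ⟨f, rfl⟩ := exists_fiberVec_eq k hk
  have horb : {f' : Fin n → Fin I | fiberVec f' = fiberVec f} =
      MulAction.orbit (Equiv.Perm (Fin n))ᵈᵐᵃ f := by
    ext f'
    rw [Set.mem_ofPred_eq, fiberVec_eq_iff, MulAction.mem_orbit_iff]
    constructor
    · rintro ⟨σ, rfl⟩
      exact ⟨DomMulAct.mk σ, rfl⟩
    · rintro ⟨σ, rfl⟩
      exact ⟨DomMulAct.mk.symm σ, rfl⟩
  have hstab : Nat.card (MulAction.stabilizer (Equiv.Perm (Fin n))ᵈᵐᵃ f) =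
      ∏ i, (fiberVec f i).factorial := by
    rw [Nat.card_congr MulOpposite.opEquiv,
      Nat.card_congr (DomMulAct.stabilizerMulEquiv f).toEquiv, Nat.card_pi]
    exact Finset.prod_congr rfl fun i _ => Nat.card_perm
  have hgrp : Nat.card (Equiv.Perm (Fin n))ᵈᵐᵃ = n.factorial := by
    rw [← Nat.card_congr (DomMulAct.mk (M := Equiv.Perm (Fin n))), Nat.card_perm, Nat.card_fin]
  have hmul := (MulAction.stabilizer (Equiv.Perm (Fin n))ᵈᵐᵃ f).card_mul_index
  rw [MulAction.index_stabilizer, hstab, hgrp, ← horb] at hmul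
  have hspec := Nat.multinomial_spec Finset.univ (fiberVec f)
  rw [hk, ← hmul] at hspec
  exact (Nat.eq_of_mul_eq_mul_left
    (Finset.prod_pos fun i _ => Nat.factorial_pos _) hspec).symm

lemma card_pairModel {n I : ℕ} {V : Type} [Fintype V] (N : Fin I → Fin I → V → Bool) :
    Nat.card (PairModel n I V N) = ∑ f : Fin n → Fin I, extCount N f := by
  unfold extCount
  rw [← Nat.card_sigma]
  exact Nat.card_congr
    { toFun := fun m => ⟨m.f, m.g, m.valid⟩
      invFun := fun x => ⟨x.1, x.2.1, x.2.2⟩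
      left_inv := fun _ => rfl
      right_inv := fun _ => rfl }

/-- The number of valid pair-assignments `g` extending `f : Fin n → Fin I`
depends only on the fiber vector of `f`: if `f` and `f'` have the same fiber vector then they
admit the same number of valid `g`.  Consequently, writing `E k` for this common number for
fiber vector `k`, the total number of models on `Fin n` equals
`∑_{k : Σk = n} C(n;k) · E(k)` (the sum ranging over vectors `k : Fin I → ℕ` with `Σ_i k_i = n`,
and `C(n;k)` the multinomial coefficient). -/
theorem stmt3 (n I : ℕ) (V : Type) [Fintype V] [DecidableEq V]
    (s : V → V) (hs : Function.Involutive s)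
    (N : Fin I → Fin I → V → Bool) (hN : ∀ i j v, N i j v = N j i (s v)) :
    (∀ f f' : Fin n → Fin I, fiberVec f = fiberVec f' →
        Nat.card {g : IdxPair n → V //
            ∀ p : IdxPair n, N (f p.1.1) (f p.1.2) (g p) = true} =
          Nat.card {g : IdxPair n → V //
            ∀ p : IdxPair n, N (f' p.1.1) (f' p.1.2) (g p) = true}) ∧
      ∃ E : (Fin I → ℕ) → ℕ,
        (∀ f : Fin n → Fin I,
          Nat.card {g : IdxPair n → V //
              ∀ p : IdxPair n, N (f p.1.1) (f p.1.2) (g p) = true} = E (fiberVec f)) ∧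
        Nat.card (PairModel n I V N) =
          ∑ k ∈ Finset.Nat.antidiagonalTuple I n, Nat.multinomial Finset.univ k * E k := by
  refine ⟨fun f f' h => extCount_congr hs hN h, ?_⟩
  -- `extCount` factors through `fiberVec`; vectors that are no fiber vector get the value `0`.
  have hE : ∀ f : Fin n → Fin I,
      extCount N f = Function.extend fiberVec (extCount (n := n) N) 0 (fiberVec f) := fun f =>
    (Function.FactorsThrough.extend_apply (f := fiberVec) (g := extCount (n := n) N)
      (fun _ _ h => extCount_congr hs hN h) 0 f).symm
  refine ⟨Function.extend fiberVec (extCount (n := n) N) 0, hE, ?_⟩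
  rw [card_pairModel, ← Finset.sum_fiberwise_of_maps_to (g := fiberVec)
    (t := Finset.Nat.antidiagonalTuple I n)
    (fun f _ => Finset.Nat.mem_antidiagonalTuple.mpr (sum_fiberVec f))]
  refine Finset.sum_congr rfl fun k hk => ?_
  rw [← card_fiberVec_eq k (Finset.Nat.mem_antidiagonalTuple.mp hk), Set.ncard_eq_toFinset_card',
    Set.toFinset_ofPred, ← smul_eq_mul]
  refine Finset.sum_eq_card_nsmul fun f hf => ?_
  rw [hE, (Finset.mem_filter.mp hf).2]
end

section
/- The number of models on Fin n in which every element has a Ψ-witness equals ∑_{k=0}^{n} (−1)^k p_k, where p_k is the number of pairs (ω, S) of a model ω and a k-element subset S of Fin n all of whose elements are blocked in ω. (This computes the first-order model count of ∀x∀y.Φ(x,y) ∧ ∀x∃y.Ψ(x,y) on a domain of size n by inclusion–exclusion, without negative weights.) -/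
/-- Unordered pairs of 1-types, represented by ordered pairs `i ≤ j`. -/
abbrev TPair (I : ℕ) := {p : Fin I × Fin I // p.1 ≤ p.2}

/-- The normalized pair-type of a pair `a < b` in a model: `g(a,b)` if `f a ≤ f b`,
and `s (g(a,b))` otherwise. -/
def normType {n I : ℕ} {V : Type} {N : Fin I → Fin I → V → Bool}
    (s : V → V) (ω : PairModel n I V N) (q : IdxPair n) : V :=
  if ω.f q.1.1 ≤ ω.f q.1.2 then ω.g q else s (ω.g q)

/-- `h^{ij}_v(ω)`: the number of pairs `a < b` whose 1-types are `{f a, f b} = {i, j}` and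
whose normalized pair-type is `v`. -/
noncomputable def hstat {n I : ℕ} {V : Type} {N : Fin I → Fin I → V → Bool}
    (s : V → V) (ω : PairModel n I V N) (p : TPair I) (v : V) : ℕ :=
  Nat.card {q : IdxPair n //
    ((ω.f q.1.1 = p.1.1 ∧ ω.f q.1.2 = p.1.2) ∨ (ω.f q.1.1 = p.1.2 ∧ ω.f q.1.2 = p.1.1)) ∧
    normType s ω q = v}

/-- An element `a` of a model `(f,g)` has a Ψ-witness if `W0 (f a) = true` (i.e. `Ψ(a,a)`
holds), or there is `b` with `a < b` and `W (f a) (f b) (g(a,b)) = true`, or there is `b < a`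
and `W (f a) (f b) (s (g(b,a))) = true`; otherwise `a` is blocked. -/
def hasWitness {n I : ℕ} {V : Type} {N : Fin I → Fin I → V → Bool}
    (s : V → V) (W : Fin I → Fin I → V → Bool) (W0 : Fin I → Bool)
    (ω : PairModel n I V N) (a : Fin n) : Prop :=
  W0 (ω.f a) = true ∨
    (∃ b : Fin n, ∃ hab : a < b, W (ω.f a) (ω.f b) (ω.g ⟨(a, b), hab⟩) = true) ∨
    (∃ b : Fin n, ∃ hba : b < a, W (ω.f a) (ω.f b) (s (ω.g ⟨(b, a), hba⟩)) = true)

/-- A model is determined by its two type assignments, so there are finitely many. -/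
theorem PairModel.finite (n I : ℕ) (V : Type) [Finite V] (N : Fin I → Fin I → V → Bool) :
    Finite (PairModel n I V N) := by
  refine Finite.of_injective (β := (Fin n → Fin I) × (IdxPair n → V)) (fun ω => (ω.f, ω.g)) ?_
  rintro ⟨f, g, h⟩ ⟨f', g', h'⟩ heq
  obtain ⟨rfl, rfl⟩ := Prod.mk.inj heq
  rfl

/-- Inclusion–exclusion for a family of properties `P · a` of the points of a finite type `Ω`,
with the terms grouped by the size of the set of violated properties. -/
theorem card_forall_eq_alternating_sum {Ω : Type} [Finite Ω] (n : ℕ) (P : Ω → Fin n → Prop) :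
    (Nat.card {ω : Ω // ∀ a, P ω a} : ℤ) =
      ∑ k ∈ Finset.range (n + 1), (-1 : ℤ) ^ k *
        (Nat.card {x : Ω × Finset (Fin n) // x.2.card = k ∧ ∀ a ∈ x.2, ¬ P x.1 a} : ℤ) := by
  classical
  have := Fintype.ofFinite Ω
  -- The signed number of sets of violated properties is the indicator of there being none.
  have key : ∀ ω : Ω, (∑ S : Finset (Fin n), if ∀ a ∈ S, ¬ P ω a then (-1 : ℤ) ^ S.card else 0) =
      if ∀ a, P ω a then 1 else 0 := by
    intro ω
    have hpow : Finset.univ.filter (fun S : Finset (Fin n) => ∀ a ∈ S, ¬ P ω a) =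
        (Finset.univ.filter fun a => ¬ P ω a).powerset := by
      ext S
      simp [Finset.subset_iff]
    rw [← Finset.sum_filter, hpow, Finset.sum_powerset_neg_one_pow_card]
    simp [Finset.filter_eq_empty_iff]
  have hk : ∀ k, (-1 : ℤ) ^ k *
      (Nat.card {x : Ω × Finset (Fin n) // x.2.card = k ∧ ∀ a ∈ x.2, ¬ P x.1 a} : ℤ) =
      ∑ x : Ω × Finset (Fin n),
        if k = x.2.card then (if ∀ a ∈ x.2, ¬ P x.1 a then (-1 : ℤ) ^ x.2.card else 0) else 0 := by
    intro k
    rw [Nat.card_eq_fintype_card, Fintype.card_subtype, Finset.card_filter, Nat.cast_sum,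
      Finset.mul_sum]
    refine Finset.sum_congr rfl fun x _ => ?_
    split_ifs <;> simp_all
  have hle : ∀ S : Finset (Fin n), S.card < n + 1 := fun S =>
    Nat.lt_succ_of_le (by simpa using S.card_le_univ)
  simp only [hk]
  rw [Finset.sum_comm]
  simp only [Finset.sum_ite_eq', Finset.mem_range, hle, if_true]
  rw [Fintype.sum_prod_type]
  simp only [key]
  rw [Nat.card_eq_fintype_card, Fintype.card_subtype, Finset.card_filter]
  push_cast
  rfl

/-- The number of models on `Fin n` in which every element has a Ψ-witness
equals `∑_{k=0}^{n} (−1)^k p_k`, where `p_k` is the number of pairs `(ω, S)` of a model `ω` and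
a `k`-element subset `S` of `Fin n` all of whose elements are blocked in `ω`.  This computes
the first-order model count of `∀x∀y.Φ(x,y) ∧ ∀x∃y.Ψ(x,y)` on a domain of size `n` by
inclusion–exclusion, without negative weights. -/
theorem stmt9 (n I : ℕ) (V : Type) [Fintype V] [DecidableEq V]
    (s : V → V) (hs : Function.Involutive s)
    (N : Fin I → Fin I → V → Bool) (hN : ∀ i j v, N i j v = N j i (s v))
    (W : Fin I → Fin I → V → Bool) (W0 : Fin I → Bool) :
    (Nat.card {ω : PairModel n I V N // ∀ a : Fin n, hasWitness s W W0 ω a} : ℤ) =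
      ∑ k ∈ Finset.range (n + 1), (-1 : ℤ) ^ k *
        (Nat.card {x : PairModel n I V N × Finset (Fin n) //
          x.2.card = k ∧ ∀ a ∈ x.2, ¬ hasWitness s W W0 x.1 a} : ℤ) := by
  have := PairModel.finite n I V N
  exact card_forall_eq_alternating_sum n (hasWitness s W W0)
end

section
/- Define the extended type I′ = Fin I × Bool, declare a marked 1-type (i, true) admissible only if W0 i = false, and define N′ : I′ → I′ → V → Bool by N′ (i,p) (j,q) v = (N i j v) ∧ (p → ¬ W i j v) ∧ (q → ¬ W j i (s v)); set n′_{(i,p)(j,q)} = |{v : N′ (i,p) (j,q) v = true}|. Then the number of models on Fin n in which every element has a Ψ-witness equals ∑_{k′ : Σk′ = n, k′ supported on admissible extended 1-types} (−1)^{k′(P)} C(n;k′) ∏_{(i,p) ≤ (j,q)} (n′_{(i,p)(j,q)})^{k′((i,p),(j,q))}, where k′(P) = ∑_i k′_{(i,true)} is the total number of marked elements. (This is the paper's closed-form for FOMC of ∀x∀y.Φ(x,y) ∧ ∀x∃y.Ψ(x,y): the sign (−1)^{k(P)} over lifted interpretations of Φ′ = Φ ∧ (P(x) → ¬Ψ(x,y)).)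 -/
/-- The extended compatibility function `N′` on marked 1-types `(i,p) ∈ Fin I × Bool`:
`N′ (i,p) (j,q) v = N i j v ∧ (p → ¬ W i j v) ∧ (q → ¬ W j i (s v))`. -/
def exN {I : ℕ} {V : Type} (s : V → V) (N W : Fin I → Fin I → V → Bool)
    (t t' : Fin I × Bool) (v : V) : Bool :=
  N t.1 t'.1 v && (!t.2 || !(W t.1 t'.1 v)) && (!t'.2 || !(W t'.1 t.1 (s v)))

/-- `n′_{(i,p)(j,q)} = |{v : N′ (i,p) (j,q) v = true}|`. -/
noncomputable def exNty {I : ℕ} {V : Type} (s : V → V) (N W : Fin I → Fin I → V → Bool)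
    (t t' : Fin I × Bool) : ℕ :=
  Nat.card {v : V // exN s N W t t' v = true}

/-- A linear ordering of the extended 1-types `Fin I × Bool`, via an embedding into `ℕ`. -/
def exIdx {I : ℕ} (t : Fin I × Bool) : ℕ := 2 * (t.1 : ℕ) + (if t.2 then 1 else 0)

/-- `k′(t,t′) = k′_t (k′_t − 1)/2` if `t = t′` and `k′_t · k′_{t′}` otherwise. -/
def exKij {I : ℕ} (k : Fin I × Bool → ℕ) (t t' : Fin I × Bool) : ℕ :=
  if t = t' then k t * (k t - 1) / 2 else k t * k t'

/-- The maps `F : Fin n → T` with prescribed fibre sizes `k` are counted by comparing the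
coefficient of `X ^ k` in the two expansions of `(∑ t, X t) ^ n`. -/
lemma card_filter_count_eq_multinomial {T : Type} [Fintype T] [DecidableEq T] (n : ℕ)
    (k : T → ℕ) (hk : ∑ t, k t = n) :
    (Finset.univ.filter (fun F : Fin n → T =>
      (fun t => (Finset.univ.filter (fun a => F a = t)).card) = k)).card
      = Nat.multinomial Finset.univ k := by
  classical
  have h1 : (∑ t : T, (MvPolynomial.X t : MvPolynomial T ℕ)) ^ n =
      ∑ F : Fin n → T, MvPolynomial.monomial
        (Finsupp.equivFunOnFinite.symm
          (fun t => (Finset.univ.filter (fun a => F a = t)).card)) 1 := by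
    rw [Finset.sum_pow', Fintype.piFinset_univ]
    refine Finset.sum_congr rfl fun F _ => ?_
    simp only [MvPolynomial.X]
    rw [← MvPolynomial.monomial_sum_one]
    refine congrArg (fun x => MvPolynomial.monomial x 1) (Finsupp.ext fun t => ?_)
    simp [Finsupp.finsetSum_apply, Finsupp.single_apply]
  have h2 := Finset.sum_pow_eq_sum_piAntidiag Finset.univ
    (fun t : T => (MvPolynomial.X t : MvPolynomial T ℕ)) n
  have h3 : ∀ l : T → ℕ, (∏ t, (MvPolynomial.X t : MvPolynomial T ℕ) ^ l t) =
      MvPolynomial.monomial (Finsupp.equivFunOnFinite.symm l) 1 := by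
    intro l
    simp only [MvPolynomial.X_pow_eq_monomial]
    rw [← MvPolynomial.monomial_sum_one]
    refine congrArg (fun x => MvPolynomial.monomial x 1) (Finsupp.ext fun t => ?_)
    simp [Finsupp.finsetSum_apply, Finsupp.single_apply]
  rw [h1] at h2
  have h4 := congrArg (MvPolynomial.coeff (Finsupp.equivFunOnFinite.symm k)) h2
  simp only [h3, MvPolynomial.coeff_sum, ← map_natCast (MvPolynomial.C (σ := T) (R := ℕ)),
    MvPolynomial.coeff_C_mul, MvPolynomial.coeff_monomial, EmbeddingLike.apply_eq_iff_eq] at h4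
  rw [Finset.card_filter, h4]
  simp [hk]

/-- A sum over maps `F : Fin n → T` of a quantity depending only on the fibre sizes of `F`
collapses to a sum over fibre size vectors, weighted by multinomial coefficients. -/
lemma sum_count_eq_sum_multinomial {T : Type} [Fintype T] [DecidableEq T] (n : ℕ)
    (Φ : (T → ℕ) → ℤ) :
    ∑ F : Fin n → T, Φ (fun t => (Finset.univ.filter (fun a => F a = t)).card) =
      ∑ k ∈ Finset.piAntidiag Finset.univ n, (Nat.multinomial Finset.univ k : ℤ) * Φ k := by
  classical
  rw [← Finset.sum_fiberwise_of_maps_to (t := Finset.piAntidiag Finset.univ n)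
    (g := fun (F : Fin n → T) t => (Finset.univ.filter (fun a => F a = t)).card)]
  · refine Finset.sum_congr rfl fun k hk => ?_
    rw [← card_filter_count_eq_multinomial n k (by simpa using hk), ← nsmul_eq_mul,
      ← Finset.sum_const]
    refine Finset.sum_congr rfl fun F hF => ?_
    rw [(Finset.mem_filter.1 hF).2]
  · intro F _
    have := Finset.card_eq_sum_card_fiberwise (f := F) (s := Finset.univ) (t := Finset.univ)
      (by simp)
    simpa using this.symm

lemma card_lt_pairs {n : ℕ} (S : Finset (Fin n)) :
    (Finset.univ.filter (fun q : IdxPair n => q.1.1 ∈ S ∧ q.1.2 ∈ S)).card =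
      S.card * (S.card - 1) / 2 := by
  have e : (Finset.univ.filter (fun q : IdxPair n => q.1.1 ∈ S ∧ q.1.2 ∈ S)).card =
      (S.offDiag.filter (fun q => q.1 < q.2)).card := by
    refine Finset.card_bij (fun q _ => q.1) ?_ ?_ ?_
    · rintro ⟨⟨a, b⟩, h⟩ hq
      simp at hq h ⊢
      exact ⟨⟨hq.1, hq.2, h.ne⟩, h⟩
    · rintro a _ b _ h
      exact Subtype.ext h
    · rintro ⟨a, b⟩ hq
      simp at hq
      exact ⟨⟨(a, b), hq.2⟩, by simp [hq.1.1, hq.1.2.1], rfl⟩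
  -- swapping coordinates pairs off the two halves of the off-diagonal
  have e2 : (S.offDiag.filter (fun q => ¬ q.1 < q.2)).card =
      (S.offDiag.filter (fun q => q.1 < q.2)).card := by
    refine Finset.card_bij (fun q _ => q.swap) ?_ ?_ ?_
    · rintro ⟨a, b⟩ hq
      simp at hq ⊢
      grind
    · rintro ⟨a, b⟩ _ ⟨c, d⟩ _ h
      simp at h ⊢
      tauto
    · rintro ⟨a, b⟩ hq
      simp at hq
      exact ⟨(b, a), by simp; grind, rfl⟩
  have e3 := Finset.card_filter_add_card_filter_not (s := S.offDiag) (fun q => q.1 < q.2)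
  rw [Finset.offDiag_card] at e3
  rw [e, Nat.mul_sub, mul_one]
  omega

/-- Grouping the pairs `a < b` by their unordered pair of extended 1-types: for symmetric `c` the
product over all pairs depends only on the fibre sizes of `F`. -/
lemma prod_pairs_eq {I n : ℕ} (c : Fin I × Bool → Fin I × Bool → ℤ)
    (hc : ∀ t t', c t t' = c t' t) (F : Fin n → Fin I × Bool) :
    ∏ q : IdxPair n, c (F q.1.1) (F q.1.2) =
      ∏ q ∈ Finset.univ.filter
          (fun q : (Fin I × Bool) × (Fin I × Bool) => exIdx q.1 ≤ exIdx q.2),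
        c q.1 q.2 ^ exKij (fun t => (Finset.univ.filter (fun a => F a = t)).card) q.1 q.2 := by
  classical
  have hinj : ∀ t t' : Fin I × Bool, exIdx t = exIdx t' → t = t' := by
    rintro ⟨i, p⟩ ⟨j, q⟩ h
    simp only [exIdx] at h
    cases p <;> cases q <;> simp [Fin.ext_iff] at h ⊢ <;> omega
  let nm : IdxPair n → (Fin I × Bool) × (Fin I × Bool) := fun q =>
    if exIdx (F q.1.1) ≤ exIdx (F q.1.2) then (F q.1.1, F q.1.2) else (F q.1.2, F q.1.1)
  rw [← Finset.prod_fiberwise_of_maps_to (g := nm) (t := Finset.univ.filter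
          (fun q : (Fin I × Bool) × (Fin I × Bool) => exIdx q.1 ≤ exIdx q.2))
      (by intro q _; simp only [nm]; split_ifs <;> simp <;> omega)]
  refine Finset.prod_congr rfl ?_
  rintro ⟨t, t'⟩ ht
  simp only [Finset.mem_filter, Finset.mem_univ, true_and] at ht
  have hval : ∀ q ∈ Finset.univ.filter (fun q => nm q = (t, t')),
      c (F q.1.1) (F q.1.2) = c t t' := by
    intro q hq
    simp only [Finset.mem_filter, Finset.mem_univ, true_and, nm] at hq
    split_ifs at hq <;> simp only [Prod.mk.injEq] at hq
    · rw [hq.1, hq.2]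
    · rw [hq.1, hq.2, hc]
  rw [Finset.prod_congr rfl hval, Finset.prod_const]
  congr 1
  by_cases h : t = t'
  · subst h
    rw [exKij, if_pos rfl, ← card_lt_pairs]
    congr 1
    ext q
    simp only [Finset.mem_filter, Finset.mem_univ, true_and, nm]
    split_ifs <;> simp [and_comm]
  · rw [exKij, if_neg h, ← Finset.card_product]
    -- the pair with types `{t, t'}` is listed with its element of type `t` first
    refine Finset.card_bij
      (fun q _ => if exIdx (F q.1.1) ≤ exIdx (F q.1.2) then q.1 else q.1.swap) ?_ ?_ ?_
    · intro q hq
      simp only [Finset.mem_filter, Finset.mem_univ, true_and, nm] at hq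
      split_ifs at hq ⊢ <;> simpa using hq
    · rintro ⟨⟨a, b⟩, hab⟩ hq ⟨⟨a', b'⟩, hab'⟩ hq' e
      simp only [Finset.mem_filter, Finset.mem_univ, true_and, nm] at hq hq' e hab hab'
      split_ifs at e <;> simp [Prod.ext_iff] at e ⊢ <;> grind
    · rintro ⟨a, b⟩ hab
      simp only [Finset.mem_product, Finset.mem_filter, Finset.mem_univ, true_and] at hab
      obtain ⟨ha, hb⟩ := hab
      have hne : exIdx t ≠ exIdx t' := fun e => h (hinj _ _ e)
      rcases lt_trichotomy a b with hl | hl | hl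
      · exact ⟨⟨(a, b), hl⟩, by simp [nm, ha, hb, ht], by simp [ha, hb, ht]⟩
      · subst hl; exact absurd (ha.symm.trans hb) h
      · have : ¬ exIdx t' ≤ exIdx t := by omega
        exact ⟨⟨(b, a), hl⟩, by simp [nm, ha, hb, this], by simp [ha, hb, this]⟩

lemma exNty_symm {I : ℕ} {V : Type} {s : V → V} (hs : Function.Involutive s)
    {N W : Fin I → Fin I → V → Bool} (hN : ∀ i j v, N i j v = N j i (s v))
    (t t' : Fin I × Bool) : exNty s N W t t' = exNty s N W t' t := by
  refine Nat.card_congr (hs.toPerm.subtypeEquiv fun v => ?_)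
  simp only [exN, Function.Involutive.coe_toPerm, hs v, ← hN t.1 t'.1 v, Bool.and_eq_true]
  tauto

/-- `hasWitness` for an arbitrary pair `(f, g)`, without the requirement that `g` be compatible
with `N`. -/
def rawWitness {n I : ℕ} {V : Type} (s : V → V) (W : Fin I → Fin I → V → Bool)
    (W0 : Fin I → Bool) (f : Fin n → Fin I) (g : IdxPair n → V) (a : Fin n) : Prop :=
  W0 (f a) = true ∨
    (∃ b : Fin n, ∃ hab : a < b, W (f a) (f b) (g ⟨(a, b), hab⟩) = true) ∨
    (∃ b : Fin n, ∃ hba : b < a, W (f a) (f b) (s (g ⟨(b, a), hba⟩)) = true)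

/-- The factor contributed by one element of extended 1-type `t`: `1` if unmarked, `-1` if marked
and admissible, `0` if marked and inadmissible. -/
def markWeight {I : ℕ} (W0 : Fin I → Bool) (t : Fin I × Bool) : ℤ :=
  if t.2 then (if W0 t.1 then 0 else -1) else 1

/-- Models all of whose marked elements are blocked are the same as models for `exN` whose marked
1-types are admissible. -/
lemma valid_and_blocked_iff {n I : ℕ} {V : Type} (s : V → V)
    (N W : Fin I → Fin I → V → Bool)
    (W0 : Fin I → Bool) (f : Fin n → Fin I) (P : Fin n → Bool) (g : IdxPair n → V) :
    ((∀ q : IdxPair n, N (f q.1.1) (f q.1.2) (g q) = true) ∧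
      ∀ a, P a = true → ¬ rawWitness s W W0 f g a) ↔
    (∀ a, P a = true → W0 (f a) = false) ∧
      ∀ q : IdxPair n,
        exN s N W (f q.1.1, P q.1.1) (f q.1.2, P q.1.2) (g q) = true := by
  simp only [rawWitness, exN, Bool.and_eq_true, Bool.or_eq_true, Bool.not_eq_true', not_or,
    not_exists, Bool.not_eq_true]
  constructor
  · rintro ⟨hv, hb⟩
    refine ⟨fun a ha => (hb a ha).1, fun q => ⟨⟨hv q, ?_⟩, ?_⟩⟩
    · cases h : P q.1.1
      · exact Or.inl rfl
      · exact Or.inr ((hb _ h).2.1 q.1.2 q.2)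
    · cases h : P q.1.2
      · exact Or.inl rfl
      · exact Or.inr ((hb _ h).2.2 q.1.1 q.2)
  · rintro ⟨h0, hq⟩
    refine ⟨fun q => (hq q).1.1, fun a ha => ⟨h0 a ha, fun b hab => ?_, fun b hba => ?_⟩⟩
    · simpa [ha] using (hq ⟨(a, b), hab⟩).1.2
    · simpa [ha] using (hq ⟨(b, a), hba⟩).2

/-- A version of `Fintype.prod_boole` for an arbitrary decidability instance on the right. -/
lemma prod_ite_one_zero_eq_ite_forall {n : ℕ} (p : Fin n → Prop) [DecidablePred p] [Decidable (∀ a, p a)] :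
    (∏ a, if p a then (1 : ℤ) else 0) = if ∀ a, p a then 1 else 0 := by
  rw [Fintype.prod_boole]
  congr

/-- Inclusion–exclusion in the form of the expansion of `∏ a, (1 - [¬ p a])` over subsets, a subset
being given by its indicator `P`. -/
lemma indicator_forall_eq_sum {n : ℕ} (p : Fin n → Prop) [DecidablePred p]
    [Decidable (∀ a, p a)] [∀ P : Fin n → Bool, Decidable (∀ a, P a = true → ¬ p a)] :
    (if ∀ a, p a then 1 else 0 : ℤ) =
      ∑ P : Fin n → Bool, (∏ a, if P a then (-1 : ℤ) else 1) *
        (if ∀ a, P a = true → ¬ p a then 1 else 0) := by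
  have h1 : (if ∀ a, p a then 1 else 0 : ℤ) =
      ∏ a, ∑ b : Bool, if b then (if p a then 0 else (-1 : ℤ)) else 1 := by
    rw [← prod_ite_one_zero_eq_ite_forall]
    refine Finset.prod_congr rfl fun a _ => ?_
    by_cases h : p a <;> simp [h]
  rw [h1, Finset.prod_univ_sum, Fintype.piFinset_univ]
  refine Finset.sum_congr rfl fun P _ => ?_
  rw [← prod_ite_one_zero_eq_ite_forall, ← Finset.prod_mul_distrib]
  refine Finset.prod_congr rfl fun a _ => ?_
  by_cases h : p a <;> cases P a <;> simp [h]

/-- For fixed extended 1-types the pair-types are chosen independently for each pair `a < b`. -/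
lemma card_pairTypes {n I : ℕ} {V : Type} [Fintype V] [DecidableEq V] (s : V → V)
    (N W : Fin I → Fin I → V → Bool) (F : Fin n → Fin I × Bool) :
    (∑ g : IdxPair n → V,
        if ∀ q : IdxPair n, exN s N W (F q.1.1) (F q.1.2) (g q) = true then (1 : ℤ) else 0) =
      ∏ q : IdxPair n, (exNty s N W (F q.1.1) (F q.1.2) : ℤ) := by
  have : ∀ q : IdxPair n, (exNty s N W (F q.1.1) (F q.1.2) : ℤ) =
      ∑ v : V, if exN s N W (F q.1.1) (F q.1.2) v = true then (1 : ℤ) else 0 := by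
    intro q
    rw [exNty, Nat.card_eq_fintype_card, Fintype.card_subtype, Finset.sum_boole]
  simp_rw [this]
  rw [Finset.prod_univ_sum, Fintype.piFinset_univ]
  refine Finset.sum_congr rfl fun g _ => ?_
  rw [← Fintype.prod_boole]

/-- The signed count of extended models, before grouping the assignments `F` by fibre sizes. -/
lemma card_models_eq_sum {n I : ℕ} {V : Type} [Fintype V] [DecidableEq V]
    (s : V → V) (N W : Fin I → Fin I → V → Bool) (W0 : Fin I → Bool) :
    (Nat.card {ω : PairModel n I V N // ∀ a : Fin n, hasWitness s W W0 ω a} : ℤ) =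
      ∑ F : Fin n → Fin I × Bool, (∏ a, markWeight W0 (F a)) *
        ∏ q : IdxPair n, (exNty s N W (F q.1.1) (F q.1.2) : ℤ) := by
  classical
  let e : {ω : PairModel n I V N // ∀ a : Fin n, hasWitness s W W0 ω a} ≃
      {x : (Fin n → Fin I) × (IdxPair n → V) //
        (∀ q : IdxPair n, N (x.1 q.1.1) (x.1 q.1.2) (x.2 q) = true) ∧
          ∀ a, rawWitness s W W0 x.1 x.2 a} :=
    { toFun := fun ω => ⟨(ω.1.f, ω.1.g), ω.1.valid, ω.2⟩
      invFun := fun x => ⟨⟨x.1.1, x.1.2, x.2.1⟩, x.2.2⟩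
      left_inv := fun _ => rfl
      right_inv := fun _ => rfl }
  rw [Nat.card_congr e, Nat.card_eq_fintype_card, Fintype.card_subtype, ← Finset.sum_boole,
    Fintype.sum_prod_type,
    ← (Equiv.arrowProdEquivProdArrow (Fin n) (fun _ => Fin I) (fun _ => Bool)).symm.sum_comp,
    Fintype.sum_prod_type]
  refine Finset.sum_congr rfl fun f _ => ?_
  have h1 : ∀ g : IdxPair n → V,
      (if (∀ q : IdxPair n, N (f q.1.1) (f q.1.2) (g q) = true) ∧
          ∀ a, rawWitness s W W0 f g a then (1 : ℤ) else 0) =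
      ∑ P : Fin n → Bool, (∏ a, markWeight W0 (f a, P a)) *
        if ∀ q : IdxPair n, exN s N W (f q.1.1, P q.1.1) (f q.1.2, P q.1.2) (g q) = true
          then (1 : ℤ) else 0 := by
    intro g
    have hmul : ∀ (A B : Prop) [Decidable A] [Decidable B] [Decidable (A ∧ B)],
        (if A then (1 : ℤ) else 0) * (if B then 1 else 0) = if A ∧ B then 1 else 0 := by
      intro A B _ _ _
      by_cases A <;> by_cases B <;> simp [*]
    rw [← hmul, indicator_forall_eq_sum, Finset.mul_sum]
    refine Finset.sum_congr rfl fun P _ => ?_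
    have hw : (∏ a, markWeight W0 (f a, P a)) = (∏ a, if P a then (-1 : ℤ) else 1) *
        if ∀ a, P a = true → W0 (f a) = false then 1 else 0 := by
      rw [← prod_ite_one_zero_eq_ite_forall, ← Finset.prod_mul_distrib]
      refine Finset.prod_congr rfl fun a _ => ?_
      by_cases hP : P a = true <;> by_cases h0 : W0 (f a) = true <;> simp [markWeight, hP, h0]
    rw [hw, mul_left_comm, mul_assoc, hmul, hmul]
    simp only [valid_and_blocked_iff s N W W0 f P g]
  simp_rw [h1]
  rw [Finset.sum_comm]
  refine Finset.sum_congr rfl fun P _ => ?_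
  rw [← Finset.mul_sum]
  exact congrArg _ (card_pairTypes s N W fun a => (f a, P a))

/-- With the extended 1-types `I′ = Fin I × Bool` (a marked type `(i,true)`
being admissible only if `W0 i = false`), the extended compatibility `N′` and counts `n′`, the
number of models on `Fin n` in which every element has a Ψ-witness equals
`∑_{k′ : Σk′ = n, k′ supported on admissible types} (−1)^{k′(P)} C(n;k′)
∏_{(i,p) ≤ (j,q)} (n′_{(i,p)(j,q)})^{k′((i,p),(j,q))}`, where `k′(P) = ∑_i k′_{(i,true)}`.
This is the paper's closed form for FOMC of `∀x∀y.Φ(x,y) ∧ ∀x∃y.Ψ(x,y)`. -/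
theorem stmt10 (n I : ℕ) (V : Type) [Fintype V] [DecidableEq V]
    (s : V → V) (hs : Function.Involutive s)
    (N : Fin I → Fin I → V → Bool) (hN : ∀ i j v, N i j v = N j i (s v))
    (W : Fin I → Fin I → V → Bool) (W0 : Fin I → Bool) :
    (Nat.card {ω : PairModel n I V N // ∀ a : Fin n, hasWitness s W W0 ω a} : ℤ) =
      ∑ᶠ (k' : Fin I × Bool → ℕ)
        (_ : (∑ t : Fin I × Bool, k' t) = n ∧
          ∀ i : Fin I, W0 i = true → k' (i, true) = 0),
        (-1 : ℤ) ^ (∑ i : Fin I, k' (i, true)) * (Nat.multinomial Finset.univ k' : ℤ) *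
          ∏ q ∈ Finset.univ.filter
              (fun q : (Fin I × Bool) × (Fin I × Bool) => exIdx q.1 ≤ exIdx q.2),
            (exNty s N W q.1 q.2 : ℤ) ^ exKij k' q.1 q.2 := by
  classical
  rw [card_models_eq_sum s]
  have h1 : ∀ F : Fin n → Fin I × Bool, (∏ a, markWeight W0 (F a)) =
      ∏ t, markWeight W0 t ^ (Finset.univ.filter (fun a => F a = t)).card := by
    intro F
    rw [← Finset.prod_fiberwise_of_maps_to (g := F) (t := Finset.univ) (by simp)]
    refine Finset.prod_congr rfl fun t _ => ?_
    rw [← Finset.prod_const]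
    refine Finset.prod_congr rfl fun a ha => ?_
    rw [(Finset.mem_filter.1 ha).2]
  simp_rw [h1, prod_pairs_eq (fun t t' => (exNty s N W t t' : ℤ))
    (fun t t' => by rw [exNty_symm hs hN])]
  rw [sum_count_eq_sum_multinomial n (fun k => (∏ t, markWeight W0 t ^ k t) *
    ∏ q ∈ Finset.univ.filter
        (fun q : (Fin I × Bool) × (Fin I × Bool) => exIdx q.1 ≤ exIdx q.2),
      (exNty s N W q.1 q.2 : ℤ) ^ exKij k q.1 q.2)]
  have h2 : ∀ k : Fin I × Bool → ℕ, (∏ t, markWeight W0 t ^ k t) =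
      if ∀ i, W0 i = true → k (i, true) = 0 then (-1 : ℤ) ^ (∑ i, k (i, true)) else 0 := by
    intro k
    rw [Fintype.prod_prod_type, ← Finset.prod_pow_eq_pow_sum]
    simp only [Fintype.prod_bool, markWeight, if_true, Bool.false_eq_true, if_false, one_pow,
      mul_one]
    by_cases h : ∀ i, W0 i = true → k (i, true) = 0
    · rw [if_pos h]
      refine Finset.prod_congr rfl fun i _ => ?_
      cases h0 : W0 i
      · simp
      · simp [h i h0]
    · rw [if_neg h]
      push Not at h
      obtain ⟨i, hi, hk⟩ := h
      exact Finset.prod_eq_zero (Finset.mem_univ i) (by simp [hi, hk])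
  rw [finsum_cond_eq_sum_of_cond_iff (t := (Finset.piAntidiag Finset.univ n).filter
    (fun k => ∀ i, W0 i = true → k (i, true) = 0)) _ (by simp), Finset.sum_filter]
  refine Finset.sum_congr rfl fun k _ => ?_
  rw [h2]
  split_ifs <;> ring
end

section
/- The number of models on Fin n in which every element has a Ψ_l-witness for every l = 1,…,q equals ∑_{m⃗ ∈ {0,…,n}^q} (−1)^{∑_l m_l} p_{m⃗}, where p_{m⃗} is the number of tuples (ω, S_1,…,S_q) of a model ω and subsets S_l ⊆ Fin n with |S_l| = m_l such that every element of S_l is Ψ_l-blocked in ω. (This computes the first-order model count of a formula in Scott's normal form ∀x∀y.Φ(x,y) ∧ ⋀_{l=1}^{q} ∀x∃y.Ψ_l(x,y) on a domain of size n.) -/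
/-- The indicator of all `B_l` being empty, as an alternating sum over tuples `S_l ⊆ B_l`. -/
theorem sum_tuples_neg_one_pow {α : Type*} [DecidableEq α] {q : ℕ} (B : Fin q → Finset α) :
    ∑ S ∈ Fintype.piFinset (fun l => (B l).powerset), (-1 : ℤ) ^ (∑ l, (S l).card) =
      if ∀ l, B l = ∅ then 1 else 0 := by
  simp_rw [← Finset.prod_pow_eq_pow_sum]
  rw [← Finset.prod_univ_sum (fun l => (B l).powerset) (fun _ S => (-1 : ℤ) ^ S.card)]
  simp_rw [Finset.sum_powerset_neg_one_pow_card]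
  rw [Finset.prod_ite_zero]
  simp

/-- Inclusion–exclusion for `q` families of events `B · l a` indexed by `a : Fin n`, graded by
the cardinalities of the chosen index sets. -/
theorem card_unblocked_eq {Ω : Type*} [Fintype Ω] (n q : ℕ) (B : Ω → Fin q → Fin n → Prop) :
    (Nat.card {ω : Ω // ∀ l a, ¬ B ω l a} : ℤ) =
      ∑ m ∈ Fintype.piFinset (fun _ : Fin q => Finset.range (n + 1)),
        (-1 : ℤ) ^ (∑ l : Fin q, m l) *
          (Nat.card {x : Ω × (Fin q → Finset (Fin n)) //
            ∀ l : Fin q, (x.2 l).card = m l ∧ ∀ a ∈ x.2 l, B x.1 l a} : ℤ) := by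
  classical
  let X : Finset (Ω × (Fin q → Finset (Fin n))) :=
    Finset.univ.filter fun x => ∀ l, ∀ a ∈ x.2 l, B x.1 l a
  -- Both sides equal the signed count of all pairs in `X`.
  trans ∑ x ∈ X, (-1 : ℤ) ^ (∑ l, (x.2 l).card)
  · have key : ∀ ω : Ω, (if ∀ l a, ¬ B ω l a then (1 : ℤ) else 0) =
        ∑ S : Fin q → Finset (Fin n),
          if ∀ l, ∀ a ∈ S l, B ω l a then (-1 : ℤ) ^ (∑ l, (S l).card) else 0 := by
      intro ω
      have h := sum_tuples_neg_one_pow fun l => Finset.univ.filter (B ω l)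
      simp only [Finset.filter_eq_empty_iff, Finset.mem_univ, true_imp_iff] at h
      rw [← h, ← Finset.sum_filter]
      refine Finset.sum_congr ?_ fun _ _ => rfl
      ext S
      simp [Fintype.mem_piFinset, Finset.subset_iff]
    rw [Nat.card_eq_fintype_card, Fintype.card_subtype, Finset.card_filter]
    push_cast
    simp_rw [key]
    rw [Finset.sum_filter, Fintype.sum_prod_type]
  · rw [← Finset.sum_fiberwise_of_maps_to
      (t := Fintype.piFinset fun _ : Fin q => Finset.range (n + 1))
      (g := fun x : Ω × (Fin q → Finset (Fin n)) => fun l => (x.2 l).card)]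
    · refine Finset.sum_congr rfl fun m _ => ?_
      rw [Finset.sum_congr rfl (g := fun _ => (-1 : ℤ) ^ (∑ l, m l)), Finset.sum_const,
        nsmul_eq_mul, mul_comm, Nat.card_eq_fintype_card, Fintype.card_subtype,
        Finset.filter_filter]
      · congr 4
        ext x
        simp only [funext_iff, forall_and]
        tauto
      · intro x hx
        rw [← (Finset.mem_filter.1 hx).2]
    · intro x _
      rw [Fintype.mem_piFinset]
      intro l
      rw [Finset.mem_range, Nat.lt_succ_iff]
      simpa using Finset.card_le_univ (x.2 l)

/-- The number of models on `Fin n` in which every element has a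
`Ψ_l`-witness for every `l = 1,…,q` equals `∑_{m⃗ ∈ {0,…,n}^q} (−1)^{∑_l m_l} p_{m⃗}`, where
`p_{m⃗}` is the number of tuples `(ω, S_1,…,S_q)` of a model `ω` and subsets `S_l ⊆ Fin n`
with `|S_l| = m_l` such that every element of `S_l` is `Ψ_l`-blocked in `ω`.  This computes
the first-order model count of a formula in Scott's normal form
`∀x∀y.Φ(x,y) ∧ ⋀_{l=1}^{q} ∀x∃y.Ψ_l(x,y)` on a domain of size `n`. -/
theorem stmt12 (n I q : ℕ) (V : Type) [Fintype V] [DecidableEq V]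
    (s : V → V) (hs : Function.Involutive s)
    (N : Fin I → Fin I → V → Bool) (hN : ∀ i j v, N i j v = N j i (s v))
    (W : Fin q → Fin I → Fin I → V → Bool) (W0 : Fin q → Fin I → Bool) :
    (Nat.card {ω : PairModel n I V N //
        ∀ (l : Fin q) (a : Fin n), hasWitness s (W l) (W0 l) ω a} : ℤ) =
      ∑ m ∈ Fintype.piFinset (fun _ : Fin q => Finset.range (n + 1)),
        (-1 : ℤ) ^ (∑ l : Fin q, m l) *
          (Nat.card {x : PairModel n I V N × (Fin q → Finset (Fin n)) //
            ∀ l : Fin q, (x.2 l).card = m l ∧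
              ∀ a ∈ x.2 l, ¬ hasWitness s (W l) (W0 l) x.1 a} : ℤ) := by
  classical
  have hinj : Function.Injective
      (fun ω : PairModel n I V N => (ω.f, ω.g)) := by
    rintro ⟨f, g, h⟩ ⟨f', g', h'⟩ heq
    obtain ⟨rfl, rfl⟩ := Prod.mk.inj heq
    rfl
  haveI : Fintype (PairModel n I V N) := Fintype.ofInjective _ hinj
  simpa only [not_not] using
    card_unblocked_eq n q (fun (ω : PairModel n I V N) l a => ¬ hasWitness s (W l) (W0 l) ω a)
end
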